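/- arXiv:2308.08868 — 5 statements merged into one kernel-verified Lean document; each statement's English description precedes it below -/
import Mathlib

section
/- Let G be a finite simple graph that is d-degenerate. Then the VC-dimension of G is at most d + 1. -/
/-- A set `S` of vertices is *shattered* in `G` if every subset `X ⊆ S` is the
intersection of `S` with the neighbourhood of some vertex. -/
def SimpleGraph.Shattered {V : Type*} (G : SimpleGraph V) (S : Set V) : Prop :=
  ∀ X ⊆ S, ∃ w : V, G.neighborSet w ∩ S = X

/-- A graph is `d`-degenerate if it admits a linear order on its vertices in which
every vertex has at most `d` neighbours preceding it. -/
def SimpleGraph.Degenerate {V : Type*} (G : SimpleGraph V) (d : ℕ) : Prop :=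
  ∃ lo : LinearOrder V, ∀ v : V, {u : V | G.Adj u v ∧ lo.lt u v}.ncard ≤ d

/-- If `G` is `d`-degenerate, then its VC-dimension is at most `d + 1`, i.e.
every shattered set of vertices has size at most `d + 1`. -/
theorem vc_le_degeneracy_succ {V : Type*} [Fintype V] (G : SimpleGraph V) (d : ℕ)
    (hdeg : G.Degenerate d) (S : Set V) (hS : G.Shattered S) :
    S.ncard ≤ d + 1 := by
  obtain ⟨lo, hlo⟩ := hdeg
  choose w hw using fun t : V => hS (S \ {t}) Set.sdiff_subset
  have hadj : ∀ t, ∀ s ∈ S, s ≠ t → G.Adj (w t) s := fun t s hs hst =>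
    ((hw t).symm ▸ (⟨hs, hst⟩ : s ∈ S \ {t}) : s ∈ G.neighborSet (w t) ∩ S).1
  have hnadj : ∀ t ∈ S, ¬ G.Adj (w t) t := fun t ht h =>
    (hw t ▸ (⟨h, ht⟩ : t ∈ G.neighborSet (w t) ∩ S) : t ∈ S \ {t}).2 rfl
  have hinj : Set.InjOn w S := by
    intro t ht t' ht' h
    by_contra hne
    exact hnadj t ht (h ▸ hadj t' t ht hne)
  rcases S.eq_empty_or_nonempty with rfl | hne
  · simp
  -- The largest vertex of `S ∪ w '' S` has at least `|S| - 1` neighbours in that set.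
  obtain ⟨m, hm, hmax⟩ := Set.exists_max_image (S ∪ w '' S) id (Set.toFinite _) hne.inl
  have hlt : ∀ u ∈ S ∪ w '' S, G.Adj u m → u < m := fun u hu h =>
    lt_of_le_of_ne (hmax u hu) h.ne
  suffices h : ∃ T : Set V, S.ncard ≤ T.ncard + 1 ∧ T ⊆ {u | G.Adj u m ∧ u < m} by
    obtain ⟨T, hcard, hT⟩ := h
    have hle : T.ncard ≤ d := (Set.ncard_le_ncard hT (Set.toFinite _)).trans (hlo m)
    omega
  rcases hm with hm | ⟨t, ht, rfl⟩
  · refine ⟨w '' (S \ {m}), ?_, ?_⟩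
    · rw [(hinj.mono Set.sdiff_subset).ncard_image,
        Set.ncard_sdiff_singleton_add_one hm (Set.toFinite _)]
    · rintro _ ⟨s, ⟨hs, hsm⟩, rfl⟩
      have h := hadj s m hm (Ne.symm hsm)
      exact ⟨h, hlt _ (Or.inr ⟨s, hs, rfl⟩) h⟩
  · refine ⟨S \ {t}, (Set.ncard_sdiff_singleton_add_one ht (Set.toFinite _)).ge, ?_⟩
    rintro s ⟨hs, hst⟩
    have h := (hadj t s hs hst).symm
    exact ⟨h, hlt s (Or.inl hs) h⟩
end

section
/- Let G be a finite simple graph and let S be a set of vertices shattered in G with |S| = s ≥ 1. Then there exists a nonempty set U of vertices of G such that the subgraph of G induced on U has minimum degree at least s − 1. -/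
/-- If `S` is a shattered set of size `s ≥ 1` in `G`, then some nonempty set `U` of
vertices induces a subgraph of minimum degree at least `s - 1`. -/
theorem exists_induced_min_degree_of_shattered {V : Type*} [Fintype V]
    (G : SimpleGraph V) (S : Set V) (s : ℕ) (hs : 1 ≤ s) (hcard : S.ncard = s)
    (hS : G.Shattered S) :
    ∃ U : Set V, U.Nonempty ∧ ∀ u ∈ U, s - 1 ≤ {v : V | v ∈ U ∧ G.Adj u v}.ncard := by
  have hne : S.Nonempty := Set.nonempty_of_ncard_ne_zero (by omega)
  refine ⟨S ∪ {w | s - 1 ≤ (G.neighborSet w ∩ S).ncard}, hne.inl, ?_⟩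
  rintro u (hu | hu)
  · -- The vertices cutting out `S \ {y}`, for `y ∈ S \ {u}`, are distinct neighbours of `u`.
    choose w hw using fun y : V => hS (S \ {y}) Set.sdiff_subset
    have hinj : Set.InjOn w (S \ {u}) := by
      intro y hy z hz hyz
      by_contra hyz_ne
      have hmem : y ∈ S \ {z} := ⟨hy.1, hyz_ne⟩
      rw [← hw z, ← hyz, hw y] at hmem
      exact hmem.2 rfl
    have himage : (w '' (S \ {u})).ncard = s - 1 := by
      rw [hinj.ncard_image, Set.ncard_sdiff_singleton_of_mem hu, hcard]
    refine himage.ge.trans (Set.ncard_le_ncard ?_ (Set.toFinite _))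
    rintro _ ⟨y, hy, rfl⟩
    have hadj : u ∈ G.neighborSet (w y) ∩ S := by
      rw [hw y]
      exact ⟨hu, fun h => hy.2 h.symm⟩
    refine ⟨Or.inr ?_, hadj.1.symm⟩
    rw [Set.mem_ofPred_eq, hw y, Set.ncard_sdiff_singleton_of_mem hy.1, hcard]
  · exact hu.trans (Set.ncard_le_ncard (fun v hv => ⟨Or.inl hv.2, hv.1⟩) (Set.toFinite _))
end

section
/- Let G be a finite simple graph that is d-degenerate. Then G contains no ladder of length 2d + 2. -/
/-- The vertices `a 0, …, a (n-1), b 0, …, b (n-1)` form a *ladder* of length `n` in `G`: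
they are pairwise distinct and `a i` is adjacent to `b j` exactly when `j < i`. -/
def SimpleGraph.IsLadder {V : Type*} (G : SimpleGraph V) (n : ℕ)
    (a b : Fin n → V) : Prop :=
  Function.Injective a ∧ Function.Injective b ∧ (∀ i j, a i ≠ b j) ∧
    ∀ i j, G.Adj (a i) (b j) ↔ j < i

/-- A vertex with `d + 1` distinct preceding neighbours has more than `d` preceding neighbours. -/
theorem SimpleGraph.lt_ncard_of_injective {V : Type*} [Finite V] (G : SimpleGraph V)
    [LinearOrder V] {d : ℕ} {v : V} (f : Fin (d + 1) → V) (hf : Function.Injective f)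
    (hadj : ∀ k, G.Adj (f k) v) (hlt : ∀ k, f k < v) :
    d < {u : V | G.Adj u v ∧ u < v}.ncard := by
  have hsub : Set.range f ⊆ {u : V | G.Adj u v ∧ u < v} := by
    rintro _ ⟨k, rfl⟩
    exact ⟨hadj k, hlt k⟩
  have hcard : (Set.range f).ncard = d + 1 := by
    rw [← Set.image_univ, Set.ncard_image_of_injective _ hf, Set.ncard_univ, Nat.card_fin]
  have hle := Set.ncard_le_ncard hsub (Set.toFinite _)
  omega

/-- A graph containing a (not necessarily induced) `K_{d+1,d+1}` is not `d`-degenerate. -/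
theorem SimpleGraph.not_degenerate_of_biclique {V : Type*} [Finite V] (G : SimpleGraph V)
    {d : ℕ} (x y : Fin (d + 1) → V) (hx : Function.Injective x) (hy : Function.Injective y)
    (hadj : ∀ i j, G.Adj (x i) (y j)) : ¬ G.Degenerate d := by
  rintro ⟨lo, hlo⟩
  obtain ⟨i, hi⟩ := Finite.exists_max x
  obtain ⟨j, hj⟩ := Finite.exists_max y
  rcases lt_or_gt_of_ne (hadj i j).ne with h | h
  · exact (hlo (y j)).not_gt
      (G.lt_ncard_of_injective x hx (fun k => hadj k j) fun k => (hi k).trans_lt h)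
  · exact (hlo (x i)).not_gt
      (G.lt_ncard_of_injective y hy (fun k => (hadj i k).symm) fun k => (hj k).trans_lt h)

/-- A `d`-degenerate graph contains no ladder of length `2d + 2`. -/
theorem no_ladder_of_degenerate {V : Type*} [Fintype V] (G : SimpleGraph V) (d : ℕ)
    (hdeg : G.Degenerate d) :
    ¬ ∃ a b : Fin (2 * d + 2) → V, G.IsLadder (2 * d + 2) a b := by
  rintro ⟨a, b, ha, hb, -, hab⟩
  refine G.not_degenerate_of_biclique
    (fun k : Fin (d + 1) => a ⟨d + 1 + k, by omega⟩) (fun k : Fin (d + 1) => b ⟨k, by omega⟩)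
    (fun k l h => ?_) (fun k l h => ?_) (fun i j => ?_) hdeg
  · have := congrArg Fin.val (ha h)
    simp only at this
    omega
  · have := congrArg Fin.val (hb h)
    simp only at this
    omega
  · rw [hab, Fin.lt_def]
    simp only
    omega
end

section
/- Let d ≥ 2, let G be a finite simple graph with vertex set V equipped with a linear order < of left-degree at most d, let S ⊆ V be shattered in G with |S| = t, and set p = ⌈log₂ d⌉ + 1. Then either t ≤ p, or there exist p vertices w_1,…,w_p ∈ V such that S ⊆ N⁻(w_1) ∪ ⋯ ∪ N⁻(w_p). -/
namespace SimpleGraph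

variable {V : Type*} [Fintype V] [LinearOrder V] {G : SimpleGraph V} {d : ℕ} {S : Finset V}

/-- Among more than `d` subsets of a shattered set `S` that avoid `m ∈ S`, the complement in `S`
of one of them lies in the neighbourhood of a vertex to the right of `m`. -/
lemma Shattered.exists_gt_of_lt_card (hS : G.Shattered (S : Set V))
    (hdeg : ∀ v : V, {u : V | G.Adj u v ∧ u < v}.ncard ≤ d) {m : V} (hm : m ∈ S)
    (𝒜 : Finset (Finset V)) (h𝒜 : ∀ Y ∈ 𝒜, Y ⊆ S.erase m) (hcard : d < 𝒜.card) :
    ∃ w, m < w ∧ ∃ Y ∈ 𝒜, ∀ u ∈ S, u ∉ Y → G.Adj u w := by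
  have hS' : ∀ Y : Finset V, ∃ w, ∀ u ∈ S, G.Adj u w ↔ u ∉ Y := by
    intro Y
    obtain ⟨w, hw⟩ := hS ((S \ Y : Finset V) : Set V) (by simp)
    refine ⟨w, fun u hu => ?_⟩
    have := Set.ext_iff.1 hw u
    simpa [hu, G.adj_comm w u] using this
  choose f hf using hS'
  by_contra! hcon
  have hmaps : ∀ Y ∈ (𝒜 : Set (Finset V)), f Y ∈ {u : V | G.Adj u m ∧ u < m} := by
    intro Y hY
    have hmY : m ∉ Y := fun h => Finset.notMem_erase m S (h𝒜 Y hY h)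
    have hadj : G.Adj m (f Y) := (hf Y m hm).2 hmY
    refine ⟨hadj.symm, lt_of_le_of_ne (not_lt.1 fun hlt => ?_) hadj.ne'⟩
    obtain ⟨u, huS, huY, hu⟩ := hcon (f Y) hlt Y hY
    exact hu ((hf Y u huS).2 huY)
  have hinj : Set.InjOn f (𝒜 : Set (Finset V)) := by
    intro Y hY Z hZ hYZ
    have hYS : Y ⊆ S := (h𝒜 Y hY).trans (Finset.erase_subset _ _)
    have hZS : Z ⊆ S := (h𝒜 Z hZ).trans (Finset.erase_subset _ _)
    ext u
    by_cases hu : u ∈ S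
    · have hY := hf Y u hu
      rw [hYZ, hf Z u hu] at hY
      tauto
    · exact ⟨fun h => absurd (hYS h) hu, fun h => absurd (hZS h) hu⟩
  have hle := Set.ncard_le_ncard_of_injOn f hmaps hinj
  rw [Set.ncard_coe_finset] at hle
  exact absurd (hle.trans (hdeg m)) (not_le.2 hcard)

/-- If `Q` contains `R \ {m}` with `m ∈ R`, then strictly more than half of the subsets of
`Q` meet `R \ {m}` in at most `|R| / 2` elements. -/
lemma _root_.Finset.two_pow_card_lt_two_mul_card_filter {α : Type*} [DecidableEq α] (Q R : Finset α) (m : α)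
    (hm : m ∈ R) (hRQ : R.erase m ⊆ Q) :
    2 ^ Q.card < 2 * (Q.powerset.filter fun Y => (R.erase m ∩ Y).card ≤ R.card / 2).card := by
  set A := Q.powerset.filter fun Y => (R.erase m ∩ Y).card ≤ R.card / 2 with hA
  set B := Q.powerset.filter fun Y => ¬ (R.erase m ∩ Y).card ≤ R.card / 2 with hB
  have hAB : A.card + B.card = 2 ^ Q.card := by
    rw [hA, hB, Finset.card_filter_add_card_filter_not, Finset.card_powerset]
  have hr : (R.erase m).card + 1 = R.card := Finset.card_erase_add_one hm
  have hcompl : ∀ Y, (R.erase m ∩ Y).card + (R.erase m ∩ (Q \ Y)).card = (R.erase m).card := by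
    intro Y
    have : R.erase m ∩ (Q \ Y) = R.erase m \ Y := by
      ext u
      have := @hRQ u
      simp only [Finset.mem_inter, Finset.mem_sdiff]
      tauto
    rw [this, add_comm, Finset.card_sdiff_add_card_inter]
  obtain ⟨Z, hZR, hZ⟩ := Finset.exists_subset_card_eq
    (show (R.erase m).card / 2 ≤ (R.erase m).card from Nat.div_le_self _ _)
  have hZcard : (R.erase m ∩ Z).card = (R.erase m).card / 2 := by
    rw [Finset.inter_eq_right.2 hZR, hZ]
  have hZA : Z ∈ A := by
    simp only [hA, Finset.mem_filter, Finset.mem_powerset]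
    exact ⟨hZR.trans hRQ, by omega⟩
  have hBA : B.card ≤ (A.erase Z).card := by
    refine Finset.card_le_card_of_injOn (fun Y => Q \ Y) ?_ ?_
    · intro Y hY
      simp only [hB, Finset.coe_filter, Finset.mem_powerset, Set.mem_ofPred_eq] at hY
      have hY' := hcompl Y
      simp only [hA, Finset.coe_erase, Finset.coe_filter, Finset.mem_powerset]
      refine ⟨⟨Finset.sdiff_subset, by omega⟩, fun h => ?_⟩
      have h : Q \ Y = Z := h
      rw [h] at hY'
      omega
    · intro Y hY Y' hY' h
      simp only [hB, Finset.coe_filter, Finset.mem_powerset, Set.mem_ofPred_eq] at hY hY'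
      have h : Q \ Y = Q \ Y' := h
      rw [← Finset.sdiff_sdiff_eq_self hY.1, h, Finset.sdiff_sdiff_eq_self hY'.1]
  have := Finset.card_erase_add_one hZA
  omega

/-- Some left neighbourhood misses at most half of a given subset of a large shattered set. -/
lemma Shattered.exists_card_filter_le_half (hS : G.Shattered (S : Set V))
    (hdeg : ∀ v : V, {u : V | G.Adj u v ∧ u < v}.ncard ≤ d) (hd : 2 * d ≤ 2 ^ (S.card - 1))
    [Nonempty V] [DecidableRel G.Adj] {R : Finset V} (hR : R ⊆ S) :
    ∃ w, (R.filter fun u => ¬ (G.Adj u w ∧ u < w)).card ≤ R.card / 2 := by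
  rcases R.eq_empty_or_nonempty with rfl | hne
  · simp
  set m := R.max' hne
  have hm : m ∈ R := R.max'_mem hne
  have hlt := Finset.two_pow_card_lt_two_mul_card_filter (S.erase m) R m hm
    (Finset.erase_subset_erase m hR)
  rw [Finset.card_erase_of_mem (hR hm)] at hlt
  obtain ⟨w, hw, Y, hY, hwY⟩ := hS.exists_gt_of_lt_card hdeg (hR hm)
    ((S.erase m).powerset.filter fun Y => (R.erase m ∩ Y).card ≤ R.card / 2)
    (fun Y hY => Finset.mem_powerset.1 (Finset.mem_filter.1 hY).1) (by omega)
  rw [Finset.mem_filter, Finset.mem_powerset] at hY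
  refine ⟨w, (Finset.card_le_card fun u hu => ?_).trans hY.2⟩
  rw [Finset.mem_filter] at hu
  have huY : u ∈ Y := by
    by_contra h
    exact hu.2 ⟨hwY u (hR hu.1) h, (R.le_max' u hu.1).trans_lt hw⟩
  simp [hu.1, huY, Finset.ne_of_mem_erase (hY.1 huY)]

lemma Shattered.exists_leftCover (hS : G.Shattered (S : Set V))
    (hdeg : ∀ v : V, {u : V | G.Adj u v ∧ u < v}.ncard ≤ d) (hd : 2 * d ≤ 2 ^ (S.card - 1))
    [Nonempty V] (k : ℕ) (R : Finset V) (hR : R ⊆ S) (hk : R.card < 2 ^ k) :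
    ∃ w : Fin k → V, ∀ u ∈ R, ∃ i, G.Adj u (w i) ∧ u < w i := by
  classical
  induction k generalizing R with
  | zero =>
    have : R = ∅ := by simpa using hk
    exact ⟨Fin.elim0, by simp [this]⟩
  | succ k ih =>
    obtain ⟨w, hw⟩ := hS.exists_card_filter_le_half hdeg hd hR
    obtain ⟨f, hf⟩ := ih _ ((Finset.filter_subset _ _).trans hR)
      (hw.trans_lt (by rw [pow_succ] at hk; omega))
    refine ⟨Fin.cons w f, fun u hu => ?_⟩
    by_cases huw : G.Adj u w ∧ u < w
    · exact ⟨0, by simpa using huw⟩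
    · obtain ⟨i, hi⟩ := hf u (Finset.mem_filter.2 ⟨hu, huw⟩)
      exact ⟨i.succ, by simpa using hi⟩

/-- If `|S| > d + 1`, some left neighbourhood contains all but at most one element of `S`. -/
lemma Shattered.exists_forall_ne_adj (hS : G.Shattered (S : Set V))
    (hdeg : ∀ v : V, {u : V | G.Adj u v ∧ u < v}.ncard ≤ d) (hd : d + 1 < S.card) :
    ∃ w, ∃ y ∈ S, ∀ u ∈ S, u ≠ y → G.Adj u w ∧ u < w := by
  have hne : S.Nonempty := Finset.card_pos.1 (by omega)
  have hm := S.max'_mem hne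
  obtain ⟨w, hw, Y, hY, hwY⟩ := hS.exists_gt_of_lt_card hdeg hm
    ((S.erase (S.max' hne)).image singleton)
    (by
      intro Y hY
      obtain ⟨y, hy, rfl⟩ := Finset.mem_image.1 hY
      exact Finset.singleton_subset_iff.2 hy)
    (by
      rw [Finset.card_image_of_injective _ Finset.singleton_injective, Finset.card_erase_of_mem hm]
      omega)
  obtain ⟨y, hy, rfl⟩ := Finset.mem_image.1 hY
  exact ⟨w, y, Finset.mem_of_mem_erase hy, fun u hu huy =>
    ⟨hwY u hu (by simpa using huy), (S.le_max' u hu).trans_lt hw⟩⟩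

end SimpleGraph

/-- If `G` carries a linear order of left-degree at most `d ≥ 2` and `S` is a shattered
set of size `t`, then with `p = ⌈log₂ d⌉ + 1` either `t ≤ p` or `S` is covered by the
left neighbourhoods of `p` vertices. -/
theorem shattered_small_or_leftCovered {V : Type*} [Fintype V] (G : SimpleGraph V)
    (d : ℕ) (hd : 2 ≤ d) (lo : LinearOrder V)
    (hdeg : ∀ v : V, {u : V | G.Adj u v ∧ lo.lt u v}.ncard ≤ d)
    (S : Set V) (hS : G.Shattered S) (t : ℕ) (ht : S.ncard = t) :
    t ≤ Nat.clog 2 d + 1 ∨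
      ∃ w : Fin (Nat.clog 2 d + 1) → V,
        S ⊆ ⋃ i, {u : V | G.Adj u (w i) ∧ lo.lt u (w i)} := by
  obtain ⟨S, rfl⟩ := S.toFinite.exists_finset_coe
  rw [Set.ncard_coe_finset] at ht
  subst ht
  refine or_iff_not_imp_left.2 fun hlt => ?_
  rw [not_le] at hlt
  have hpow : d ≤ 2 ^ Nat.clog 2 d := Nat.le_pow_clog one_lt_two d
  have hbig : 2 * d ≤ 2 ^ (S.card - 1) :=
    calc 2 * d ≤ 2 ^ (Nat.clog 2 d + 1) := by rw [pow_succ]; omega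
      _ ≤ 2 ^ (S.card - 1) := Nat.pow_le_pow_right two_pos (by omega)
  have hne : S.Nonempty := Finset.card_pos.1 (by omega)
  have : Nonempty V := ⟨hne.choose⟩
  suffices h : ∃ w : Fin (Nat.clog 2 d + 1) → V, ∀ u ∈ S, ∃ i, G.Adj u (w i) ∧ u < w i by
    obtain ⟨w, hw⟩ := h
    exact ⟨w, fun u hu => Set.mem_iUnion.2 (hw u hu)⟩
  rcases lt_or_ge S.card (2 ^ (Nat.clog 2 d + 1)) with hsmall | hlarge
  · exact hS.exists_leftCover hdeg hbig _ S subset_rfl hsmall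
  · rw [pow_succ] at hlarge
    obtain ⟨w, y, hy, hw⟩ := hS.exists_forall_ne_adj hdeg (by omega)
    obtain ⟨f, hf⟩ := hS.exists_leftCover hdeg hbig (Nat.clog 2 d) {y}
      (Finset.singleton_subset_iff.2 hy) (by rw [Finset.card_singleton]; omega)
    refine ⟨Fin.cons w f, fun u hu => ?_⟩
    by_cases huy : u = y
    · obtain ⟨i, hi⟩ := hf u (Finset.mem_singleton.2 huy)
      exact ⟨i.succ, by simpa using hi⟩
    · exact ⟨0, by simpa using hw u hu huy⟩
end

section
/- Let d ≥ 2, let G be a finite simple graph with vertex set V equipped with a linear order < of left-degree at most d, set p = ⌈log₂ d⌉ + 1, let S ⊆ V be shattered in G with |S| = t > p, and let c be an integer with 1 ≤ c ≤ p. Then there exist c vertices w_1,…,w_c ∈ V such that the set (N⁻(w_1) ∪ ⋯ ∪ N⁻(w_c)) ∩ S is shattered in G and has size at least c·t/p. -/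
namespace SimpleGraph

variable {V : Type*} [Fintype V] [LinearOrder V] {G : SimpleGraph V} {d : ℕ}

/-- The neighbours of `v` that precede `v` in the order. -/
def leftNeighborSet (G : SimpleGraph V) (v : V) : Set V := {u | G.Adj u v ∧ u < v}

theorem Shattered.mono {V : Type*} {G : SimpleGraph V} {S T : Set V} (hS : G.Shattered S)
    (hTS : T ⊆ S) : G.Shattered T := by
  intro X hX
  obtain ⟨w, hw⟩ := hS X (hX.trans hTS)
  refine ⟨w, ?_⟩
  rw [← Set.inter_eq_right.2 hTS, ← Set.inter_assoc, hw]
  exact Set.inter_eq_left.2 hX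

/-- Among more than `d` traces on a shattered set that all contain `m`, one is realised by a
vertex to the right of `m`. -/
theorem Shattered.exists_lt_of_card_lt {S : Finset V} (hS : G.Shattered (S : Set V)) {m : V}
    (hdeg : (G.leftNeighborSet m).ncard ≤ d) (F : Finset (Finset V))
    (hF : ∀ Y ∈ F, Y ⊆ S ∧ m ∈ Y) (hcard : d < F.card) :
    ∃ Y ∈ F, ∃ w, m < w ∧ G.neighborSet w ∩ S = Y := by
  choose f hf using fun Y : F => hS Y.1 (Finset.coe_subset.2 (hF Y.1 Y.2).1)
  by_contra! hno
  have hinj : Function.Injective f := fun Y Z h =>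
    Subtype.ext (Finset.coe_injective ((hf Y).symm.trans (h ▸ hf Z)))
  have hsub : Set.range f ⊆ G.leftNeighborSet m := by
    rintro _ ⟨Y, rfl⟩
    have hadj : G.Adj (f Y) m := by
      have : m ∈ G.neighborSet (f Y) ∩ S := by
        rw [hf Y]
        exact (hF Y.1 Y.2).2
      exact this.1
    refine ⟨hadj, lt_of_le_of_ne (not_lt.1 fun h => hno Y.1 Y.2 _ h (hf Y)) hadj.ne⟩
  have hle := Set.ncard_le_ncard hsub (Set.toFinite _)
  rw [Set.ncard_range_of_injective hinj, Nat.card_eq_fintype_card, Fintype.card_coe] at hle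
  omega

/-- Every element of a large shattered set has a neighbour to its right. -/
theorem Shattered.exists_mem_leftNeighborSet {S : Finset V} (hS : G.Shattered (S : Set V))
    (hdeg : ∀ v, (G.leftNeighborSet v).ncard ≤ d) (hcard : d < 2 ^ (S.card - 1))
    {s : V} (hs : s ∈ S) : ∃ w, s ∈ G.leftNeighborSet w := by
  have hsS : {s} ⊆ S := Finset.singleton_subset_iff.2 hs
  obtain ⟨Y, hY, w, hlt, hw⟩ := hS.exists_lt_of_card_lt (hdeg s) (Finset.Icc {s} S)
    (fun Y hY => by simpa [and_comm] using hY)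
    (by rwa [Finset.card_Icc_finset hsS, Finset.card_singleton])
  have : s ∈ G.neighborSet w ∩ S := by
    rw [hw]
    simpa using (Finset.mem_Icc.1 hY).1
  exact ⟨w, this.1.symm, hlt⟩

/-- Some left neighbourhood contains all but at most `q` elements of a shattered set. -/
theorem Shattered.exists_card_le_leftNeighborSet {S : Finset V}
    (hS : G.Shattered (S : Set V)) (hdeg : ∀ v, (G.leftNeighborSet v).ncard ≤ d) {q : ℕ}
    (hq : 1 ≤ q) (hdq : d ≤ 2 ^ q) (hqS : q + 2 ≤ S.card) :
    ∃ w, S.card ≤ (G.leftNeighborSet w ∩ S).ncard + q := by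
  have hne : S.Nonempty := Finset.card_pos.1 (by omega)
  set m := S.max' hne
  have hm : m ∈ S := S.max'_mem hne
  have hmS : {m} ⊆ S := Finset.singleton_subset_iff.2 hm
  obtain ⟨X, hmX, hXS, hX⟩ := Finset.exists_subsuperset_card_eq hmS
    (n := S.card - q) (by simp; omega) (by omega)
  rw [Finset.singleton_subset_iff] at hmX
  obtain ⟨x, hxX, hxm⟩ := Finset.exists_mem_ne (by omega : 1 < X.card) m
  obtain ⟨X', hmX', hX'S, hX'⟩ := Finset.exists_subsuperset_card_eq
    (s := {m}) (t := S.erase x) (n := S.card - q)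
    (by simpa using ⟨hxm.symm, hm⟩) (by simp; omega)
    (by rw [Finset.card_erase_of_mem (hXS hxX)]; omega)
  rw [Finset.singleton_subset_iff] at hmX'
  have hnot : X' ∉ Finset.Icc X S := fun h =>
    Finset.notMem_erase x S (hX'S ((Finset.mem_Icc.1 h).1 hxX))
  obtain ⟨Y, hY, w, hlt, hw⟩ := hS.exists_lt_of_card_lt (hdeg m)
    (insert X' (Finset.Icc X S))
    (fun Y hY => by
      rcases Finset.mem_insert.1 hY with rfl | hY
      · exact ⟨hX'S.trans (Finset.erase_subset _ _), hmX'⟩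
      · exact ⟨(Finset.mem_Icc.1 hY).2, (Finset.mem_Icc.1 hY).1 hmX⟩)
    (by
      rw [Finset.card_insert_of_notMem hnot, Finset.card_Icc_finset hXS, hX,
        Nat.sub_sub_self (by omega)]
      omega)
  have hYcard : S.card - q ≤ Y.card := by
    rcases Finset.mem_insert.1 hY with rfl | hY
    · exact hX'.ge
    · exact hX.ge.trans (Finset.card_le_card (Finset.mem_Icc.1 hY).1)
  have hsub : (Y : Set V) ⊆ G.leftNeighborSet w ∩ S := by
    rw [← hw]
    exact fun u hu => ⟨⟨hu.1.symm, (S.le_max' u hu.2).trans_lt hlt⟩, hu.2⟩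
  have hle := Set.ncard_le_ncard hsub (Set.toFinite _)
  rw [Set.ncard_coe_finset] at hle
  exact ⟨w, by omega⟩

/-- `n + 1` suitable left neighbourhoods contain all but at most `q - n` elements of a shattered
set. -/
theorem Shattered.exists_card_le_iUnion_leftNeighborSet {S : Finset V}
    (hS : G.Shattered (S : Set V)) (hdeg : ∀ v, (G.leftNeighborSet v).ncard ≤ d) {q : ℕ}
    (hq : 1 ≤ q) (hdq : d ≤ 2 ^ q) (hqS : q + 2 ≤ S.card) (n : ℕ) (hn : n ≤ q) :
    ∃ w : Fin (n + 1) → V,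
      S.card + n ≤ ((⋃ i, G.leftNeighborSet (w i)) ∩ S).ncard + q := by
  induction n with
  | zero =>
    obtain ⟨w, hw⟩ := hS.exists_card_le_leftNeighborSet hdeg hq hdq hqS
    exact ⟨fun _ => w, by simpa [Set.iUnion_const] using hw⟩
  | succ n ih =>
    obtain ⟨w, hw⟩ := ih (by omega)
    have hunion (v : V) : ⋃ i, G.leftNeighborSet ((Fin.cons v w : Fin (n + 2) → V) i) =
        G.leftNeighborSet v ∪ ⋃ i, G.leftNeighborSet (w i) := by
      ext u
      simp [Fin.exists_fin_succ]
    by_cases hall : (S : Set V) ⊆ ⋃ i, G.leftNeighborSet (w i)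
    · refine ⟨Fin.cons (w 0) w, ?_⟩
      rw [hunion, Set.inter_eq_right.2 (hall.trans Set.subset_union_right),
        Set.ncard_coe_finset]
      omega
    · obtain ⟨s, hs, hsw⟩ := Set.not_subset.1 hall
      have hd : d < 2 ^ (S.card - 1) := hdq.trans_lt (Nat.pow_lt_pow_right one_lt_two (by omega))
      obtain ⟨v, hv⟩ := hS.exists_mem_leftNeighborSet hdeg hd hs
      refine ⟨Fin.cons v w, ?_⟩
      rw [hunion]
      have hlt : ((⋃ i, G.leftNeighborSet (w i)) ∩ S).ncard <
          ((G.leftNeighborSet v ∪ ⋃ i, G.leftNeighborSet (w i)) ∩ S).ncard :=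
        Set.ncard_lt_ncard ((Set.ssubset_iff_of_subset
          (Set.inter_subset_inter_left _ Set.subset_union_right)).2
          ⟨s, ⟨Or.inl hv, hs⟩, fun h => hsw h.1⟩) (Set.toFinite _)
      omega

end SimpleGraph


/-- If `G` carries a linear order of left-degree at most `d ≥ 2`, `S` is a shattered set
of size `t > p` where `p = ⌈log₂ d⌉ + 1`, and `1 ≤ c ≤ p`, then there are `c` vertices
whose left neighbourhoods intersect `S` in a shattered set of size at least `c·t/p`. -/
theorem shattered_approx {V : Type*} [Fintype V] (G : SimpleGraph V)
    (d : ℕ) (hd : 2 ≤ d) (lo : LinearOrder V)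
    (hdeg : ∀ v : V, {u : V | G.Adj u v ∧ lo.lt u v}.ncard ≤ d)
    (S : Set V) (hS : G.Shattered S) (t : ℕ) (ht : S.ncard = t)
    (htp : Nat.clog 2 d + 1 < t)
    (c : ℕ) (hc1 : 1 ≤ c) (hcp : c ≤ Nat.clog 2 d + 1) :
    ∃ w : Fin c → V,
      G.Shattered ((⋃ i, {u : V | G.Adj u (w i) ∧ lo.lt u (w i)}) ∩ S) ∧
      (c * t : ℚ) / (Nat.clog 2 d + 1 : ℕ) ≤
        ((⋃ i, {u : V | G.Adj u (w i) ∧ lo.lt u (w i)}) ∩ S).ncard := by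
  classical
  obtain ⟨n, rfl⟩ : ∃ n, c = n + 1 := ⟨c - 1, by omega⟩
  have hcard : S.toFinset.card = t := by rw [← Set.ncard_eq_toFinset_card', ht]
  have hq : 1 ≤ Nat.clog 2 d := Nat.clog_pos one_lt_two hd
  obtain ⟨w, hw⟩ :=
    SimpleGraph.Shattered.exists_card_le_iUnion_leftNeighborSet (S := S.toFinset) (G := G)
      (by rwa [Set.coe_toFinset]) hdeg hq (Nat.le_pow_clog one_lt_two d) (by omega) n (by omega)
  rw [Set.coe_toFinset, hcard] at hw
  refine ⟨w, hS.mono Set.inter_subset_right, ?_⟩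
  change _ ≤ (((⋃ i, G.leftNeighborSet (w i)) ∩ S).ncard : ℚ)
  rw [div_le_iff₀ (by positivity)]
  have h₁ : (t + n : ℚ) ≤ ((⋃ i, G.leftNeighborSet (w i)) ∩ S).ncard + Nat.clog 2 d := by
    exact_mod_cast hw
  have h₂ : (n : ℚ) ≤ Nat.clog 2 d := by exact_mod_cast (by omega : n ≤ Nat.clog 2 d)
  have h₃ : (Nat.clog 2 d + 1 : ℚ) ≤ t := by exact_mod_cast htp.le
  push_cast
  nlinarith [mul_nonneg (sub_nonneg.2 h₂) (sub_nonneg.2 h₃),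
    mul_le_mul_of_nonneg_right h₁ (by positivity : (0 : ℚ) ≤ Nat.clog 2 d + 1)]
end
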